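/- Let Q be an extended Dynkin quiver with minimal positive imaginary root δ and let λ ∈ K^I satisfy λ·δ = 0. Then Σ_λ consists exactly of δ together with the indecomposable elements of ℕR_λ^+ (an element of ℕR_λ^+ being indecomposable if it is nonzero and cannot be written as a sum of two nonzero elements of ℕR_λ^+), and every element of Σ_λ is ≤ δ componentwise. -/

import Mathlib

open scoped BigOperators

noncomputable section

/-- A quiver with a finite vertex set `I` and a finite arrow set `A`;
`h a` and `t a` are the head and the tail of the arrow `a`. -/
structure FinQuiver where
  I : Type
  [fintypeI : Fintype I]
  [decEqI : DecidableEq I]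
  A : Type
  [fintypeA : Fintype A]
  h : A → I
  t : A → I

attribute [instance] FinQuiver.fintypeI FinQuiver.decEqI FinQuiver.fintypeA

namespace FinQuiver

variable (Q : FinQuiver)

/-- Arrows of the double quiver `Q̄` : every arrow `a : i → j` of `Q` (as `Sum.inl a`)
together with a reverse arrow `a* : j → i` (as `Sum.inr a`). -/
@[reducible] def DA : Type := Q.A ⊕ Q.A

instance : Fintype Q.DA := inferInstanceAs (Fintype (Q.A ⊕ Q.A))

/-- Head of an arrow of the double quiver. -/
@[reducible] def dh : Q.DA → Q.I := fun a => match a with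
  | Sum.inl a => Q.h a
  | Sum.inr a => Q.t a

/-- Tail of an arrow of the double quiver. -/
@[reducible] def dt : Q.DA → Q.I := fun a => match a with
  | Sum.inl a => Q.t a
  | Sum.inr a => Q.h a

/-- The symmetric bilinear form
`(α,β) = ∑_{i∈I} 2 α_i β_i − ∑_{a∈Q̄} α_{h(a)} β_{t(a)}` on `ℤ^I`. -/
def bil (α β : Q.I → ℤ) : ℤ :=
  (∑ i, 2 * α i * β i) - ∑ a : Q.DA, α (Q.dh a) * β (Q.dt a)

/-- `p(α) = 1 − q(α) = 1 − α·α + ∑_{a ∈ Q} α_{t(a)} α_{h(a)}`. -/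
def pp (α : Q.I → ℤ) : ℤ :=
  1 - (∑ i, α i * α i) + ∑ a : Q.A, α (Q.t a) * α (Q.h a)

/-- The coordinate vector `ε_i` at a vertex `i`. -/
def ev (i : Q.I) : Q.I → ℤ := fun j => if j = i then 1 else 0

/-- The coordinate vector of a vertex, as a vector of natural numbers. -/
def evN (i : Q.I) : Q.I → ℕ := fun j => if j = i then 1 else 0

/-- A vertex is loopfree if no arrow has both its head and its tail there. -/
def Loopfree (i : Q.I) : Prop := ∀ a : Q.A, ¬ (Q.h a = i ∧ Q.t a = i)

/-- The reflection `s_i(α) = α − (α,ε_i) ε_i` at a (loopfree) vertex `i`. -/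
def refl (i : Q.I) (α : Q.I → ℤ) : Q.I → ℤ := α - Q.bil α (Q.ev i) • Q.ev i

/-- Two vertices are joined by some arrow. -/
def Adj (i j : Q.I) : Prop :=
  ∃ a : Q.A, (Q.h a = i ∧ Q.t a = j) ∨ (Q.h a = j ∧ Q.t a = i)

/-- The quiver is connected. -/
def Connected : Prop := ∀ i j : Q.I, Relation.ReflTransGen Q.Adj i j

/-- The support of the vector `α` is connected in `Q`. -/
def SuppConnected (α : Q.I → ℤ) : Prop :=
  ∀ i j : Q.I, α i ≠ 0 → α j ≠ 0 →
    Relation.ReflTransGen (fun x y => α x ≠ 0 ∧ α y ≠ 0 ∧ Q.Adj x y) i j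

/-- The fundamental region: nonzero nonnegative vectors with connected support
such that `(α, ε_i) ≤ 0` for every vertex `i`. -/
def InFund (α : Q.I → ℤ) : Prop :=
  α ≠ 0 ∧ (∀ i, 0 ≤ α i) ∧ Q.SuppConnected α ∧ ∀ i, Q.bil α (Q.ev i) ≤ 0

/-- The roots of the Kac root system attached to `Q` : the real roots form the orbit
of the simple roots (coordinate vectors at loopfree vertices) under the reflections at
loopfree vertices, and the imaginary roots form the orbit of `±(fundamental region)`
under these reflections. -/
inductive IsRoot : (Q.I → ℤ) → Prop
  | simple (i : Q.I) (hi : Q.Loopfree i) : IsRoot (Q.ev i)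
  | fund (α : Q.I → ℤ) (hα : Q.InFund α) : IsRoot α
  | neg_fund (α : Q.I → ℤ) (hα : Q.InFund α) : IsRoot (-α)
  | reflect (i : Q.I) (hi : Q.Loopfree i) (α : Q.I → ℤ) (hα : IsRoot α) :
      IsRoot (Q.refl i α)

/-- Positive roots: roots all of whose components are nonnegative. -/
def IsPosRoot (α : Q.I → ℤ) : Prop := Q.IsRoot α ∧ (∀ i, 0 ≤ α i) ∧ α ≠ 0

/-- The Tits form is positive semidefinite. -/
def PosSemidef : Prop := ∀ α : Q.I → ℤ, 0 ≤ Q.bil α α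

/-- The Tits form is positive definite. -/
def PosDef : Prop := Q.PosSemidef ∧ ∀ α : Q.I → ℤ, Q.bil α α = 0 → α = 0

/-- Dynkin quivers: connected, with positive definite Tits form. -/
def IsDynkin : Prop := Q.Connected ∧ Q.PosDef

/-- Extended Dynkin quivers: connected, with positive semidefinite but not
positive definite Tits form. -/
def IsExtDynkin : Prop := Q.Connected ∧ Q.PosSemidef ∧ ¬ Q.PosDef

/-- `δ` is the minimal positive imaginary root of an extended Dynkin quiver:
the minimal nonzero nonnegative vector in the radical of the Tits form. -/
def IsMinImag (δ : Q.I → ℤ) : Prop :=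
  (∀ i, 0 ≤ δ i) ∧ δ ≠ 0 ∧ (∀ i, Q.bil δ (Q.ev i) = 0) ∧
    ∀ β : Q.I → ℤ, (∀ i, 0 ≤ β i) → β ≠ 0 → (∀ i, Q.bil β (Q.ev i) = 0) →
      ∀ i, δ i ≤ β i

/-- The subquiver of `Q` on a subset `S` of vertices and a subset `B` of arrows. -/
def restrict (S : Set Q.I) (B : Set Q.A) (hh : ∀ a ∈ B, Q.h a ∈ S)
    (ht : ∀ a ∈ B, Q.t a ∈ S) : FinQuiver :=
  { I := S
    fintypeI := Fintype.ofFinite S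
    decEqI := Classical.decEq _
    A := B
    fintypeA := Fintype.ofFinite B
    h := fun a => ⟨Q.h a.1, hh a.1 a.2⟩
    t := fun a => ⟨Q.t a.1, ht a.1 a.2⟩ }

/-- The support quiver of a vector: the full subquiver on the support of `β`. -/
def suppQuiver (β : Q.I → ℤ) : FinQuiver :=
  Q.restrict {i | β i ≠ 0} {a | β (Q.h a) ≠ 0 ∧ β (Q.t a) ≠ 0}
    (fun _ ha => ha.1) (fun _ ha => ha.2)

/-- A dimension vector (of natural numbers), viewed in `ℤ^I`. -/
def toZ (α : Q.I → ℕ) : Q.I → ℤ := fun i => (α i : ℤ)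

/-- An oriented cycle in the double quiver `Q̄`, consisting of `n+1` arrows,
the tail of each arrow being the head of the (cyclically) next one. -/
structure Cyc (Q' : FinQuiver) where
  n : ℕ
  ar : Fin (n + 1) → Q'.DA
  compat : ∀ i : Fin (n + 1), Q'.dt (ar i) = Q'.dh (ar (i + 1))

section WithField

variable (K : Type) [Field K]

/-- `λ·α = ∑_i λ_i α_i`. -/
def pair (l : Q.I → K) (α : Q.I → ℤ) : K := ∑ i, l i * (α i : K)

/-- `R_λ^+`, the set of positive roots `α` with `λ·α = 0`. -/
def Rplus (l : Q.I → K) : Set (Q.I → ℤ) :=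
  {α | Q.IsPosRoot α ∧ Q.pair K l α = 0}

/-- `ℕ R_λ^+`, the set of sums (including the empty sum `0`) of elements of `R_λ^+`. -/
def NRplus (l : Q.I → K) : Set (Q.I → ℤ) :=
  (AddSubmonoid.closure (Q.Rplus K l) : AddSubmonoid (Q.I → ℤ))

/-- `Σ_λ` : the elements `α ∈ R_λ^+` with `p(α) > ∑ p(β⁽ᵗ⁾)` for every decomposition
of `α` as a sum of at least two elements `β⁽ᵗ⁾` of `R_λ^+`. -/
def SigmaSet (l : Q.I → K) : Set (Q.I → ℤ) :=
  {α | α ∈ Q.Rplus K l ∧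
    ∀ (n : ℕ) (β : Fin n → (Q.I → ℤ)), 2 ≤ n → (∀ j, β j ∈ Q.Rplus K l) →
      α = ∑ j, β j → (∑ j, Q.pp (β j)) < Q.pp α}

/-- The dual reflection `r_i(λ)_j = λ_j − (ε_i,ε_j) λ_i`. -/
def coRefl (i : Q.I) (l : Q.I → K) : Q.I → K :=
  fun j => l j - (Q.bil (Q.ev i) (Q.ev j) : ℤ) * l i

/-- A single admissible reflection applied to the pair `(λ, α)`:
a reflection at a loopfree vertex `i` with `λ_i ≠ 0`. -/
def AdmStep (x y : (Q.I → K) × (Q.I → ℤ)) : Prop :=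
  ∃ i : Q.I, Q.Loopfree i ∧ x.1 i ≠ 0 ∧ y.1 = Q.coRefl K i x.1 ∧ y.2 = Q.refl i x.2

/-- `(ν,β)` is obtained from `(λ,α)` by a sequence of admissible reflections:
the two pairs lie in the same class of the equivalence relation generated by
admissible reflections. -/
def AdmEquiv (x y : (Q.I → K) × (Q.I → ℤ)) : Prop :=
  Relation.EqvGen (Q.AdmStep K) x y

/-- The space `Rep(Q̄,α)` of representations of the double quiver. -/
def Rep (α : Q.I → ℕ) : Type :=
  ∀ a : Q.DA, Matrix (Fin (α (Q.dh a))) (Fin (α (Q.dt a))) K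

/-- The moment map
`μ_α(x)_i = ∑_{a∈Q, h(a)=i} x_a x_{a*} − ∑_{a∈Q, t(a)=i} x_{a*} x_a`. -/
def moment (α : Q.I → ℕ) (x : Q.Rep K α) (i : Q.I) :
    Matrix (Fin (α i)) (Fin (α i)) K :=
  (∑ a : Q.A, if h : Q.h a = i then
      (x (Sum.inl a) * x (Sum.inr a)).submatrix
        (Fin.cast (congrArg α h).symm) (Fin.cast (congrArg α h).symm)
    else 0)
  - ∑ a : Q.A, if h : Q.t a = i then
      (x (Sum.inr a) * x (Sum.inl a)).submatrix
        (Fin.cast (congrArg α h).symm) (Fin.cast (congrArg α h).symm)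
    else 0

/-- The fibre `μ_α^{-1}(λ)` of the moment map over (the central element
corresponding to) `λ`. -/
def MomentFiber (l : Q.I → K) (α : Q.I → ℕ) : Set (Q.Rep K α) :=
  {x | ∀ i : Q.I, Q.moment K α x i = l i • (1 : Matrix (Fin (α i)) (Fin (α i)) K)}

/-- The group `∏_i GL(α_i,K)`; it acts on `Rep(Q̄,α)` by conjugation, with the same
orbits and the same invariant functions as `G(α) = (∏_i GL(α_i,K))/K^*`. -/
def Gl (α : Q.I → ℕ) : Type := ∀ i : Q.I, Matrix.GeneralLinearGroup (Fin (α i)) K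

/-- The conjugation action of `∏_i GL(α_i,K)` on `Rep(Q̄,α)`. -/
def glAct (α : Q.I → ℕ) (g : Q.Gl K α) (x : Q.Rep K α) : Q.Rep K α :=
  fun a => (g (Q.dh a) : Matrix (Fin (α (Q.dh a))) (Fin (α (Q.dh a))) K) * x a *
    (((g (Q.dt a))⁻¹ : Matrix.GeneralLinearGroup (Fin (α (Q.dt a))) K) :
      Matrix (Fin (α (Q.dt a))) (Fin (α (Q.dt a))) K)

/-- Coordinates on `Rep(Q̄,α)`: matrix entries. -/
def Coords (α : Q.I → ℕ) : Type :=
  Σ a : Q.DA, Fin (α (Q.dh a)) × Fin (α (Q.dt a))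

/-- The coordinate ring `K[V]` of a subset `V` of `Rep(Q̄,α)` : the algebra of
`K`-valued functions on `V` which are restrictions of polynomial functions. -/
def fnRing (α : Q.I → ℕ) (V : Set (Q.Rep K α)) : Subalgebra K (↥V → K) :=
  (MvPolynomial.aeval
    (fun c : Q.Coords α => fun v : ↥V => v.1 c.1 c.2.1 c.2.2) :
    MvPolynomial (Q.Coords α) K →ₐ[K] (↥V → K)).range

end WithField

end FinQuiver

/-- The subalgebra of functions invariant under a relation (e.g. the orbit
relation of a group action). -/
def relInv (K : Type) [Field K] {V : Type} (R : V → V → Prop) :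
    Subalgebra K (V → K) where
  carrier := {f | ∀ x y : V, R x y → f x = f y}
  mul_mem' := by
    intro f g hf hg x y hxy
    simp only [Pi.mul_apply, hf x y hxy, hg x y hxy]
  one_mem' := fun x y _ => rfl
  add_mem' := by
    intro f g hf hg x y hxy
    simp only [Pi.add_apply, hf x y hxy, hg x y hxy]
  zero_mem' := fun x y _ => rfl
  algebraMap_mem' := fun c x y _ => rfl

namespace FinQuiver

variable (Q : FinQuiver) (K : Type) [Field K]

/-- The coordinate ring of the Marsden–Weinstein reduction
`N(λ,α) = μ_α^{-1}(λ) ⫽ G(α)` : the `G(α)`-invariant functions in the coordinate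
ring of `μ_α^{-1}(λ)`.  Two such reductions are isomorphic as (affine) varieties
exactly when these `K`-algebras are isomorphic. -/
def InvRing (l : Q.I → K) (α : Q.I → ℕ) :
    Subalgebra K (↥(Q.MomentFiber K l α) → K) :=
  Q.fnRing K α (Q.MomentFiber K l α) ⊓
    relInv K (fun x y : ↥(Q.MomentFiber K l α) =>
      ∃ g : Q.Gl K α, y.1 = Q.glAct K α g x.1)

/-- Index type for a product `∏_t X_t^{m_t}`. -/
@[reducible] def SymIdx (s : ℕ) (m : Fin s → ℕ) : Type := Σ t : Fin s, Fin (m t)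

/-- The product `∏_{t} Rep(Q̄, d_t)^{m_t}` of representation spaces. -/
def SymRep (s : ℕ) (m : Fin s → ℕ) (d : Fin s → (Q.I → ℕ)) : Type :=
  ∀ p : SymIdx s m, Q.Rep K (d p.1)

/-- The product `∏_t μ_{d_t}^{-1}(λ)^{m_t}` of moment map fibres. -/
def SymFiber (s : ℕ) (m : Fin s → ℕ) (d : Fin s → (Q.I → ℕ)) (l : Q.I → K) :
    Set (Q.SymRep K s m d) :=
  {x | ∀ p : SymIdx s m, x p ∈ Q.MomentFiber K l (d p.1)}

/-- Polynomial functions on the product of fibres. -/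
def symFnRing (s : ℕ) (m : Fin s → ℕ) (d : Fin s → (Q.I → ℕ)) (l : Q.I → K) :
    Subalgebra K (↥(Q.SymFiber K s m d l) → K) :=
  (MvPolynomial.aeval
    (fun c : Σ p : SymIdx s m, Q.Coords (d p.1) =>
      fun v : ↥(Q.SymFiber K s m d l) => v.1 c.1 c.2.1 c.2.2.1 c.2.2.2) :
    MvPolynomial (Σ p : SymIdx s m, Q.Coords (d p.1)) K →ₐ[K]
      (↥(Q.SymFiber K s m d l) → K)).range

/-- The componentwise action of the product of the groups `∏ GL(d_t)^{m_t}`. -/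
def symGlAct (s : ℕ) (m : Fin s → ℕ) (d : Fin s → (Q.I → ℕ))
    (g : ∀ p : SymIdx s m, Q.Gl K (d p.1)) (x : Q.SymRep K s m d) :
    Q.SymRep K s m d :=
  fun p => Q.glAct K (d p.1) (g p) (x p)

/-- The action of `∏_t S_{m_t}` permuting the factors of each `X_t^{m_t}`. -/
def symPermAct (s : ℕ) (m : Fin s → ℕ) (d : Fin s → (Q.I → ℕ))
    (π : ∀ t : Fin s, Equiv.Perm (Fin (m t))) (x : Q.SymRep K s m d) :
    Q.SymRep K s m d :=
  fun p => x ⟨p.1, π p.1 p.2⟩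

/-- The coordinate ring of the product of symmetric products
`∏_t S^{m_t} N(λ, d_t)` of Marsden–Weinstein reductions: functions on
`∏_t μ_{d_t}^{-1}(λ)^{m_t}` which are polynomial, invariant under all the groups
`G(d_t)` acting on the separate factors, and symmetric under permutations of the
`m_t` factors of each type `t`. -/
def SymInvRing (s : ℕ) (m : Fin s → ℕ) (d : Fin s → (Q.I → ℕ)) (l : Q.I → K) :
    Subalgebra K (↥(Q.SymFiber K s m d l) → K) :=
  Q.symFnRing K s m d l ⊓
    relInv K (fun x y : ↥(Q.SymFiber K s m d l) =>
      ∃ g : ∀ p : SymIdx s m, Q.Gl K (d p.1), y.1 = Q.symGlAct K s m d g x.1) ⊓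
    relInv K (fun x y : ↥(Q.SymFiber K s m d l) =>
      ∃ π : ∀ t : Fin s, Equiv.Perm (Fin (m t)), y.1 = Q.symPermAct K s m d π x.1)

/-- The trace function `tr_p` of an oriented cycle `p` in `Q̄` :
`tr_p(x) = tr(x_{a_1} ⋯ x_{a_ℓ})`, written out via matrix entries. -/
def cycTr (α : Q.I → ℕ) (p : Q.Cyc) (x : Q.Rep K α) : K :=
  ∑ c : ∀ i : Fin (p.n + 1), Fin (α (Q.dh (p.ar i))),
    ∏ i : Fin (p.n + 1),
      x (p.ar i) (c i) (Fin.cast (congrArg α (p.compat i)).symm (c (i + 1)))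

/-- `U` is a subrepresentation of the `Π^λ`-module given by the point
`x ∈ Rep(Q̄,α)` : a collection of subspaces stable under all the maps `x_a`. -/
def SubRep (α : Q.I → ℕ) (x : Q.Rep K α)
    (U : ∀ i : Q.I, Submodule K (Fin (α i) → K)) : Prop :=
  ∀ a : Q.DA, ∀ v ∈ U (Q.dt a), (x a).mulVec v ∈ U (Q.dh a)

/-- The module given by `x` has the simple module `S_{i₀}` (dimension vector
`ε_{i₀}`, all arrows acting as zero) as a composition factor: it has a subquotient
of dimension vector `ε_{i₀}` on which all arrows act as zero. -/
def HasSFactor (α : Q.I → ℕ) (i0 : Q.I) (x : Q.Rep K α) : Prop :=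
  ∃ U W : ∀ i : Q.I, Submodule K (Fin (α i) → K),
    Q.SubRep K α x U ∧ Q.SubRep K α x W ∧ (∀ i, U i ≤ W i) ∧
    (∀ i, Module.finrank K (W i) =
      Module.finrank K (U i) + (if i = i0 then 1 else 0)) ∧
    (∀ a : Q.DA, Q.dh a = i0 → Q.dt a = i0 →
      ∀ v ∈ W (Q.dt a), (x a).mulVec v ∈ U (Q.dh a))

/-- `W/U` is a simple subquotient of the module given by `x`; the simple
subquotients of a module are, up to isomorphism, exactly its composition factors. -/
def SimpleSubquot (α : Q.I → ℕ) (x : Q.Rep K α)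
    (U W : ∀ i : Q.I, Submodule K (Fin (α i) → K)) : Prop :=
  Q.SubRep K α x U ∧ Q.SubRep K α x W ∧ (∀ i, U i ≤ W i) ∧ U ≠ W ∧
    ∀ V : ∀ i : Q.I, Submodule K (Fin (α i) → K),
      Q.SubRep K α x V → (∀ i, U i ≤ V i) → (∀ i, V i ≤ W i) → V = U ∨ V = W

/-- The direct sum map `∏_{j=1}^m Rep(Q̄,δ) → Rep(Q̄,mδ)` (block diagonal). -/
def dsMap (δ : Q.I → ℕ) (m : ℕ) (y : Fin m → Q.Rep K δ) :
    Q.Rep K (fun i => m * δ i) :=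
  fun a => Matrix.of fun r c =>
    if (finProdFinEquiv.symm r).1 = (finProdFinEquiv.symm c).1 then
      y (finProdFinEquiv.symm r).1 a (finProdFinEquiv.symm r).2
        (finProdFinEquiv.symm c).2
    else 0

end FinQuiver

/-!
Connected quivers with positive semidefinite Tits form have as positive roots exactly the vectors
`α > 0` with `p(α) ≥ 0`, and then `p(α)` is `0` or `1`, the value `1` meaning that `α` lies in the
radical of the form. Hence `p(α - δ) = p(α)`, so subtracting `δ` from a larger element of `R_λ^+`
leaves an element of `R_λ^+`. The decomposition `α = δ + (α - δ)` does not decrease the sum of the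
values of `p`, so no element of `Σ_λ` is larger than `δ`. As a vector with `p = 0` has entries of
one sign, an element of `R_λ^+` is either larger than `δ` or `≤ δ`; hence `Σ_λ` lies below `δ`,
and `δ` is its only element with `p = 1`. Finally an element with `p = 0` is in `Σ_λ` exactly when
it is not a sum of two or more elements of `R_λ^+`.
-/

section Indecomposable

variable {M : Type*} [AddCommMonoid M]

/-- Indecomposable elements of a submonoid `A` of a commutative monoid: nonzero elements of `A`
that are not a sum of two nonzero elements of `A`. -/
def IsIndecomposableIn (A : AddSubmonoid M) (x : M) : Prop :=
  x ∈ A ∧ x ≠ 0 ∧ ¬ ∃ y z, y ∈ A ∧ z ∈ A ∧ y ≠ 0 ∧ z ≠ 0 ∧ x = y + z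

lemma exists_fin_sum_of_mem_addSubmonoid_closure {S : Set M} {x : M}
    (hx : x ∈ AddSubmonoid.closure S) :
    ∃ (n : ℕ) (s : Fin n → M), (∀ j, s j ∈ S) ∧ x = ∑ j, s j := by
  obtain ⟨L, hL, rfl⟩ := AddSubmonoid.exists_list_of_mem_closure hx
  exact ⟨L.length, L.get, fun j => hL _ (L.get_mem j), by rw [← List.sum_ofFn, List.ofFn_get]⟩

lemma exists_fin_sum_eq_add [PartialOrder M] [IsOrderedCancelAddMonoid M] {S : Set M}
    (hS : ∀ x ∈ S, 0 < x) {n : ℕ} (hn : 2 ≤ n) {s : Fin n → M} (hs : ∀ j, s j ∈ S) :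
    ∃ y z, y ∈ AddSubmonoid.closure S ∧ z ∈ AddSubmonoid.closure S ∧ y ≠ 0 ∧ z ≠ 0 ∧
      ∑ j, s j = y + z := by
  obtain ⟨m, rfl⟩ := Nat.exists_eq_add_of_le' hn
  refine ⟨s 0, ∑ j : Fin (m + 1), s j.succ, AddSubmonoid.subset_closure (hs 0),
    sum_mem fun _ _ => AddSubmonoid.subset_closure (hs _), (hS _ (hs 0)).ne', ?_,
    Fin.sum_univ_succ s⟩
  exact (Finset.sum_pos (fun _ _ => hS _ (hs _)) Finset.univ_nonempty).ne'

lemma exists_add_eq_fin_sum {S : Set M} {y z : M} (hy : y ∈ AddSubmonoid.closure S)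
    (hz : z ∈ AddSubmonoid.closure S) (hy0 : y ≠ 0) (hz0 : z ≠ 0) :
    ∃ (n : ℕ) (s : Fin n → M), 2 ≤ n ∧ (∀ j, s j ∈ S) ∧ y + z = ∑ j, s j := by
  obtain ⟨m, s, hs, rfl⟩ := exists_fin_sum_of_mem_addSubmonoid_closure hy
  obtain ⟨n, t, ht, rfl⟩ := exists_fin_sum_of_mem_addSubmonoid_closure hz
  have hm : m ≠ 0 := by rintro rfl; exact hy0 (Fin.sum_univ_zero s)
  have hn : n ≠ 0 := by rintro rfl; exact hz0 (Fin.sum_univ_zero t)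
  exact ⟨m + n, Fin.append s t, by lia, Fin.addCases (by simpa using hs) (by simpa using ht),
    by simp [Fin.sum_univ_add]⟩

lemma isIndecomposableIn_closure_iff [PartialOrder M] [IsOrderedCancelAddMonoid M] {S : Set M}
    (hS : ∀ x ∈ S, 0 < x) {x : M} :
    IsIndecomposableIn (AddSubmonoid.closure S) x ↔
      x ∈ S ∧ ∀ (n : ℕ) (s : Fin n → M), 2 ≤ n → (∀ j, s j ∈ S) → x ≠ ∑ j, s j := by
  constructor
  · rintro ⟨hx, hx0, hindec⟩
    have hsum : ∀ (n : ℕ) (s : Fin n → M), 2 ≤ n → (∀ j, s j ∈ S) → x ≠ ∑ j, s j := by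
      rintro n s hn hs rfl
      exact hindec (exists_fin_sum_eq_add hS hn hs)
    refine ⟨?_, hsum⟩
    obtain ⟨n, s, hs, rfl⟩ := exists_fin_sum_of_mem_addSubmonoid_closure hx
    match n with
    | 0 => exact absurd (Fin.sum_univ_zero s) hx0
    | 1 => simpa using hs 0
    | n + 2 => exact absurd rfl (hsum _ s (by lia) hs)
  · rintro ⟨hx, hsum⟩
    refine ⟨AddSubmonoid.subset_closure hx, (hS x hx).ne', ?_⟩
    rintro ⟨y, z, hy, hz, hy0, hz0, rfl⟩
    obtain ⟨n, s, hn, hs, h⟩ := exists_add_eq_fin_sum hy hz hy0 hz0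
    exact hsum n s hn hs h

end Indecomposable

namespace FinQuiver

variable {Q : FinQuiver}

/-! ### The Tits form -/

lemma bil_eq_sum_arrows (α β : Q.I → ℤ) :
    Q.bil α β = ∑ i, 2 * α i * β i
      - ∑ a : Q.A, (α (Q.h a) * β (Q.t a) + α (Q.t a) * β (Q.h a)) := by
  rw [bil, Finset.sum_add_distrib]
  exact congrArg _ (Fintype.sum_sum_type _)

lemma bil_comm (α β : Q.I → ℤ) : Q.bil α β = Q.bil β α := by
  simp only [bil_eq_sum_arrows, mul_comm, mul_left_comm, add_comm]

/-- The symmetric bilinear form `bil` bundled as a Mathlib bilinear form, which makes the general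
lemmas on bilinear maps available. -/
def bilForm (Q : FinQuiver) : LinearMap.BilinForm ℤ (Q.I → ℤ) :=
  LinearMap.mk₂ ℤ Q.bil
    (fun α α' β => by
      simp only [bil, Pi.add_apply, mul_add, add_mul, Finset.sum_add_distrib]; ring)
    (fun c α β => by
      simp only [bil, Pi.smul_apply, smul_eq_mul, mul_sub, Finset.mul_sum]
      congr! 2 <;> ring)
    (fun α β β' => by
      simp only [bil, Pi.add_apply, mul_add, Finset.sum_add_distrib]; ring)
    (fun c α β => by
      simp only [bil, Pi.smul_apply, smul_eq_mul, mul_sub, Finset.mul_sum]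
      congr! 2 <;> ring)

lemma bilForm_apply (α β : Q.I → ℤ) : Q.bilForm α β = Q.bil α β := rfl

lemma bil_smul_right (c : ℤ) (α β : Q.I → ℤ) : Q.bil α (c • β) = c * Q.bil α β :=
  map_smul (Q.bilForm α) c β

lemma bil_eq_sum_ev (α β : Q.I → ℤ) : Q.bil α β = ∑ i, β i * Q.bil α (Q.ev i) := by
  have hβ : β = ∑ i, β i • Q.ev i := by ext j; simp [ev]
  conv_lhs => rw [hβ, ← bilForm_apply, map_sum]
  exact Finset.sum_congr rfl fun i _ => bil_smul_right _ _ _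

lemma bil_self (α : Q.I → ℤ) : Q.bil α α = 2 * (1 - Q.pp α) := by
  simp only [bil_eq_sum_arrows, pp, mul_assoc, mul_comm (α (Q.h _)), ← two_mul, ← Finset.mul_sum]
  ring

lemma pp_sub (α β : Q.I → ℤ) : Q.pp (α - β) = Q.pp α + Q.pp β - 1 + Q.bil α β := by
  have h : Q.bil (α - β) (α - β) = Q.bil α α - 2 * Q.bil α β + Q.bil β β := by
    simp only [← bilForm_apply, map_sub, LinearMap.sub_apply]
    simp only [bilForm_apply, bil_comm β α]
    ring
  simp only [bil_self] at h
  linarith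

lemma pp_smul (c : ℤ) (α : Q.I → ℤ) : Q.pp (c • α) = 1 - c ^ 2 * (1 - Q.pp α) := by
  have h : Q.bil (c • α) (c • α) = c ^ 2 * Q.bil α α := by
    rw [bil_smul_right, bil_comm, bil_smul_right]; ring
  simp only [bil_self] at h
  linarith

lemma pp_neg (α : Q.I → ℤ) : Q.pp (-α) = Q.pp α := by
  simp [pp]

lemma pp_ev (i : Q.I) : Q.pp (Q.ev i) = ∑ a : Q.A, if Q.h a = i ∧ Q.t a = i then 1 else 0 := by
  simp [pp, ev, ite_and]

lemma pp_ev_eq_zero_iff {i : Q.I} : Q.pp (Q.ev i) = 0 ↔ Q.Loopfree i := by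
  simp [pp_ev, Loopfree]

lemma pp_ev_nonneg (i : Q.I) : 0 ≤ Q.pp (Q.ev i) := by
  rw [pp_ev]
  positivity

lemma ev_nonneg (i : Q.I) : 0 ≤ Q.ev i := fun j => by
  simp only [ev]; split_ifs <;> simp

lemma bil_nonpos_of_disjoint {α β : Q.I → ℤ} (hα : 0 ≤ α) (hβ : 0 ≤ β) (h : α * β = 0) :
    Q.bil α β ≤ 0 := by
  have hdiag : ∑ i, 2 * α i * β i = 0 :=
    Finset.sum_eq_zero fun i _ => by rw [mul_assoc, ← Pi.mul_apply, h, Pi.zero_apply, mul_zero]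
  rw [bil_eq_sum_arrows, hdiag, zero_sub, neg_nonpos]
  exact Finset.sum_nonneg fun a _ =>
    add_nonneg (mul_nonneg (hα _) (hβ _)) (mul_nonneg (hα _) (hβ _))

/-! ### Reflections -/

lemma pp_refl {i : Q.I} (hi : Q.Loopfree i) (α : Q.I → ℤ) : Q.pp (Q.refl i α) = Q.pp α := by
  rw [refl, pp_sub, pp_smul, bil_smul_right, pp_ev_eq_zero_iff.2 hi]
  ring

lemma refl_refl {i : Q.I} (hi : Q.Loopfree i) (α : Q.I → ℤ) : Q.refl i (Q.refl i α) = α := by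
  have h : Q.bil (Q.refl i α) (Q.ev i) = -Q.bil α (Q.ev i) := by
    rw [refl, bil_comm, ← bilForm_apply, map_sub, bilForm_apply, bilForm_apply, bil_smul_right,
      bil_self, pp_ev_eq_zero_iff.2 hi, bil_comm]
    ring
  rw [refl, h, refl]
  module

lemma sum_refl (i : Q.I) (α : Q.I → ℤ) :
    ∑ j, Q.refl i α j = ∑ j, α j - Q.bil α (Q.ev i) := by
  simp [refl, ev]

lemma refl_apply_of_ne {i j : Q.I} (hij : j ≠ i) (α : Q.I → ℤ) : Q.refl i α j = α j := by
  simp [refl, ev, hij]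

lemma InFund.one_le_pp {α : Q.I → ℤ} (hα : Q.InFund α) : 1 ≤ Q.pp α := by
  have h : Q.bil α α ≤ 0 := by
    rw [bil_eq_sum_ev]
    exact Finset.sum_nonpos fun i _ =>
      mul_nonpos_of_nonneg_of_nonpos (hα.2.1 i) (hα.2.2.2 i)
  rw [bil_self] at h
  lia

lemma IsRoot.pp_nonneg {α : Q.I → ℤ} (hα : Q.IsRoot α) : 0 ≤ Q.pp α := by
  induction hα with
  | simple i hi => exact (pp_ev_eq_zero_iff.2 hi).ge
  | fund α hα => exact zero_le_one.trans hα.one_le_pp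
  | neg_fund α hα => exact (pp_neg α).symm ▸ zero_le_one.trans hα.one_le_pp
  | reflect i hi α _ ih => rwa [pp_refl hi]

/-! ### Semidefinite forms and their radical -/

lemma PosSemidef.pp_le_one (hp : Q.PosSemidef) (α : Q.I → ℤ) : Q.pp α ≤ 1 := by
  have := hp α
  rw [bil_self] at this
  lia

lemma PosSemidef.pp_eq_zero_or_one (hp : Q.PosSemidef) {α : Q.I → ℤ} (hα : 0 ≤ Q.pp α) :
    Q.pp α = 0 ∨ Q.pp α = 1 := by
  have := hp.pp_le_one α
  lia

lemma PosSemidef.bil_eq_zero_of_pp_eq_one (hp : Q.PosSemidef) {α : Q.I → ℤ} (hα : Q.pp α = 1)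
    (β : Q.I → ℤ) : Q.bil α β = 0 := by
  have h : Q.bilForm α α = 0 := by rw [bilForm_apply, bil_self, hα]; rfl
  have hker : α ∈ LinearMap.ker Q.bilForm :=
    (LinearMap.BilinForm.apply_apply_same_eq_zero_iff Q.bilForm hp ⟨bil_comm⟩).1 h
  exact LinearMap.congr_fun hker β

lemma PosSemidef.pp_sub_of_pp_eq_one (hp : Q.PosSemidef) {δ : Q.I → ℤ} (hδ : Q.pp δ = 1)
    (α : Q.I → ℤ) : Q.pp (α - δ) = Q.pp α := by
  rw [pp_sub, bil_comm, hp.bil_eq_zero_of_pp_eq_one hδ, hδ]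
  ring

lemma eq_zero_of_adj {β : Q.I → ℤ} (hβ : 0 ≤ β) {i j : Q.I} (hij : Q.Adj i j) (hi : β i = 0)
    (hbil : 0 ≤ Q.bil β (Q.ev i)) : β j = 0 := by
  have hnonneg : ∀ a ∈ Finset.univ (α := Q.A),
      0 ≤ β (Q.h a) * Q.ev i (Q.t a) + β (Q.t a) * Q.ev i (Q.h a) := fun a _ =>
    add_nonneg (mul_nonneg (hβ _) (ev_nonneg i _)) (mul_nonneg (hβ _) (ev_nonneg i _))
  have hdiag : ∑ k, 2 * β k * Q.ev i k = 0 := by simp [ev, hi]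
  rw [bil_eq_sum_arrows, hdiag, zero_sub, neg_nonneg] at hbil
  have hzero := (Finset.sum_eq_zero_iff_of_nonneg hnonneg).1
    (hbil.antisymm (Finset.sum_nonneg hnonneg))
  obtain ⟨a, ⟨ha, hb⟩ | ⟨ha, hb⟩⟩ := hij <;>
    simpa [ha, hb, hi, ev] using hzero a (Finset.mem_univ a)

lemma Connected.pos_of_bil_ev_nonneg (hc : Q.Connected) {β : Q.I → ℤ} (hβ : 0 < β)
    (hbil : ∀ i, 0 ≤ Q.bil β (Q.ev i)) (i : Q.I) : 0 < β i := by
  refine (hβ.le i).lt_of_ne' fun hi => hβ.ne' (funext fun j => ?_)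
  induction hc i j with
  | refl => exact hi
  | tail _ hadj ih => exact eq_zero_of_adj hβ.le hadj ih (hbil _)

lemma PosSemidef.pos_of_pp_eq_one (hp : Q.PosSemidef) (hc : Q.Connected) {β : Q.I → ℤ}
    (hβ : 0 < β) (h : Q.pp β = 1) (i : Q.I) : 0 < β i :=
  hc.pos_of_bil_ev_nonneg hβ (fun _ => (hp.bil_eq_zero_of_pp_eq_one h _).ge) i

lemma PosSemidef.inFund_of_pp_eq_one (hp : Q.PosSemidef) (hc : Q.Connected) {β : Q.I → ℤ}
    (hβ : 0 < β) (h : Q.pp β = 1) : Q.InFund β := by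
  have hne : ∀ i, β i ≠ 0 := fun i => (hp.pos_of_pp_eq_one hc hβ h i).ne'
  exact ⟨hβ.ne', hβ.le,
    fun i j _ _ => Relation.ReflTransGen.mono (fun _ _ hadj => ⟨hne _, hne _, hadj⟩) _ _ (hc i j),
    fun i => (hp.bil_eq_zero_of_pp_eq_one h _).le⟩

/-! ### Positive roots -/

lemma PosSemidef.nonneg_or_nonpos_of_pp_posPart (hp : Q.PosSemidef) (hc : Q.Connected)
    {α : Q.I → ℤ} (h : Q.pp α⁺ = 1) : 0 ≤ α ∨ α ≤ 0 := by
  rcases (posPart_nonneg α).eq_or_lt with h0 | hpos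
  · exact .inr (posPart_eq_zero.1 h0.symm)
  · refine .inl fun i => ?_
    have hi : 0 < (α i)⁺ := hp.pos_of_pp_eq_one hc hpos h i
    exact (posPart_pos_iff.1 hi).le

lemma PosSemidef.nonneg_or_nonpos_of_pp_eq_zero (hp : Q.PosSemidef) (hc : Q.Connected)
    {α : Q.I → ℤ} (h : Q.pp α = 0) : 0 ≤ α ∨ α ≤ 0 := by
  have hdisj : α⁺ * α⁻ = 0 := by
    ext i
    rcases le_total (α i) 0 with hi | hi
    · simp [posPart_of_nonpos hi]
    · simp [negPart_of_nonneg hi]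
  have hbil := bil_nonpos_of_disjoint (posPart_nonneg α) (negPart_nonneg α) hdisj
  have hsub := pp_sub α⁺ α⁻
  rw [posPart_sub_negPart, h] at hsub
  have hpos := hp.pp_le_one α⁺
  have hneg := hp.pp_le_one α⁻
  obtain h1 | h1 : Q.pp α⁺ = 1 ∨ Q.pp α⁻ = 1 := by lia
  · exact hp.nonneg_or_nonpos_of_pp_posPart hc h1
  · rw [← posPart_neg] at h1
    simpa [or_comm] using hp.nonneg_or_nonpos_of_pp_posPart hc h1

lemma PosSemidef.exists_loopfree_bil_pos (hp : Q.PosSemidef) {α : Q.I → ℤ} (hα : 0 ≤ α)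
    (h : Q.pp α = 0) : ∃ i, Q.Loopfree i ∧ 0 < Q.bil α (Q.ev i) := by
  obtain ⟨i, hi⟩ : ∃ i, 0 < Q.bil α (Q.ev i) := by
    by_contra! hle
    have hsum : Q.bil α α ≤ 0 := by
      rw [bil_eq_sum_ev]
      exact Finset.sum_nonpos fun i _ => mul_nonpos_of_nonneg_of_nonpos (hα i) (hle i)
    rw [bil_self, h] at hsum
    lia
  have hne : Q.pp (Q.ev i) ≠ 1 := fun h1 =>
    hi.ne' (by rw [bil_comm, hp.bil_eq_zero_of_pp_eq_one h1])
  exact ⟨i, pp_ev_eq_zero_iff.1 ((hp.pp_eq_zero_or_one (pp_ev_nonneg i)).resolve_right hne), hi⟩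

lemma eq_ev_of_refl_nonpos {i : Q.I} (hi : Q.Loopfree i) {α : Q.I → ℤ} (hα : 0 ≤ α)
    (h : Q.pp α = 0) (hrefl : Q.refl i α ≤ 0) : α = Q.ev i := by
  have hsmul : α = α i • Q.ev i := by
    ext j
    obtain rfl | hij := eq_or_ne j i
    · simp [ev]
    · have : α j ≤ 0 := (refl_apply_of_ne hij α).symm.trans_le (hrefl j)
      simpa [ev, hij] using this.antisymm (hα j)
  have hsq : α i ^ 2 = 1 := by
    have := pp_smul (α i) (Q.ev i)
    rw [← hsmul, h, pp_ev_eq_zero_iff.2 hi] at this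
    lia
  have hone : α i = 1 := (pow_eq_one_iff_of_nonneg (hα i) two_ne_zero).1 hsq
  rw [hsmul, hone, one_smul]

-- Induction on the height `∑ α_j`: reflecting at a loopfree vertex with `(α, ε_i) > 0` lowers it,
-- and by sign coherence the reflected vector stays nonnegative unless `α = ε_i`.
lemma PosSemidef.isRoot_of_pp_eq_zero (hp : Q.PosSemidef) (hc : Q.Connected) {α : Q.I → ℤ}
    (hα : 0 ≤ α) (h : Q.pp α = 0) : Q.IsRoot α := by
  induction hn : (∑ j, α j).toNat using Nat.strong_induction_on generalizing α with
  | _ n ih =>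
    obtain ⟨i, hi, hbil⟩ := hp.exists_loopfree_bil_pos hα h
    have hpp : Q.pp (Q.refl i α) = 0 := by rw [pp_refl hi, h]
    rcases hp.nonneg_or_nonpos_of_pp_eq_zero hc hpp with hpos | hneg
    · have hlt : (∑ j, Q.refl i α j).toNat < n := by
        have hsum : 0 ≤ ∑ j, Q.refl i α j := Finset.sum_nonneg fun j _ => hpos j
        rw [sum_refl] at hsum ⊢
        lia
      exact refl_refl hi α ▸ IsRoot.reflect i hi _ (ih _ hlt hpos hpp rfl)
    · exact eq_ev_of_refl_nonpos hi hα h hneg ▸ IsRoot.simple i hi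

theorem PosSemidef.isPosRoot_iff (hp : Q.PosSemidef) (hc : Q.Connected) {α : Q.I → ℤ} :
    Q.IsPosRoot α ↔ 0 < α ∧ 0 ≤ Q.pp α := by
  constructor
  · rintro ⟨hroot, hnonneg, hne⟩
    exact ⟨lt_of_le_of_ne' hnonneg hne, hroot.pp_nonneg⟩
  · rintro ⟨hpos, hpp⟩
    refine ⟨?_, hpos.le, hpos.ne'⟩
    rcases hp.pp_eq_zero_or_one hpp with h0 | h1
    · exact hp.isRoot_of_pp_eq_zero hc hpos.le h0
    · exact IsRoot.fund α (hp.inFund_of_pp_eq_one hc hpos h1)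

/-! ### The minimal imaginary root -/

lemma IsMinImag.pos {δ : Q.I → ℤ} (hδ : Q.IsMinImag δ) : 0 < δ :=
  lt_of_le_of_ne' hδ.1 hδ.2.1

lemma IsMinImag.pp_eq_one {δ : Q.I → ℤ} (hδ : Q.IsMinImag δ) : Q.pp δ = 1 := by
  have h : Q.bil δ δ = 0 := by
    rw [bil_eq_sum_ev]
    exact Finset.sum_eq_zero fun i _ => by rw [hδ.2.2.1 i, mul_zero]
  rw [bil_self] at h
  lia

lemma IsMinImag.le_of_pp_eq_one {δ β : Q.I → ℤ} (hδ : Q.IsMinImag δ) (hp : Q.PosSemidef)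
    (hβ : 0 < β) (h : Q.pp β = 1) : δ ≤ β :=
  hδ.2.2.2 β hβ.le hβ.ne' fun _ => hp.bil_eq_zero_of_pp_eq_one h _

lemma IsMinImag.lt_or_le {δ α : Q.I → ℤ} (hδ : Q.IsMinImag δ) (hp : Q.PosSemidef)
    (hc : Q.Connected) (hα : Q.IsPosRoot α) : δ < α ∨ α ≤ δ := by
  obtain ⟨hpos, hpp⟩ := (hp.isPosRoot_iff hc).1 hα
  have hle : δ ≤ α ∨ α ≤ δ := by
    rcases hp.pp_eq_zero_or_one hpp with h0 | h1
    · rw [← hp.pp_sub_of_pp_eq_one hδ.pp_eq_one] at h0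
      simpa only [sub_nonneg, sub_nonpos] using hp.nonneg_or_nonpos_of_pp_eq_zero hc h0
    · exact .inl (hδ.le_of_pp_eq_one hp hpos h1)
  exact hle.elim (fun h => h.lt_or_eq.imp_right ge_of_eq) .inr

/-! ### The set `Σ_λ` -/

section Sigma

variable {K : Type} [Field K] {l : Q.I → K}

lemma pair_sub (α β : Q.I → ℤ) : Q.pair K l (α - β) = Q.pair K l α - Q.pair K l β := by
  simp [pair, mul_sub]

lemma pos_of_mem_Rplus {α : Q.I → ℤ} (hα : α ∈ Q.Rplus K l) : 0 < α :=
  lt_of_le_of_ne' hα.1.2.1 hα.1.2.2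

lemma pp_nonneg_of_mem_Rplus {α : Q.I → ℤ} (hα : α ∈ Q.Rplus K l) : 0 ≤ Q.pp α :=
  hα.1.1.pp_nonneg

lemma PosSemidef.sub_mem_Rplus (hp : Q.PosSemidef) (hc : Q.Connected) {α δ : Q.I → ℤ}
    (hα : α ∈ Q.Rplus K l) (hδ : Q.pp δ = 1) (hl : Q.pair K l δ = 0) (hlt : δ < α) :
    α - δ ∈ Q.Rplus K l := by
  refine ⟨(hp.isPosRoot_iff hc).2 ⟨sub_pos.2 hlt, ?_⟩, by rw [pair_sub, hα.2, hl, sub_zero]⟩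
  rw [hp.pp_sub_of_pp_eq_one hδ]
  exact pp_nonneg_of_mem_Rplus hα

lemma pp_add_pp_lt_of_mem_SigmaSet {β γ : Q.I → ℤ} (h : β + γ ∈ Q.SigmaSet K l)
    (hβ : β ∈ Q.Rplus K l) (hγ : γ ∈ Q.Rplus K l) : Q.pp β + Q.pp γ < Q.pp (β + γ) := by
  simpa using h.2 2 ![β, γ] le_rfl (by simp [Fin.forall_fin_two, hβ, hγ]) (by simp)

lemma PosSemidef.not_lt_of_mem_SigmaSet (hp : Q.PosSemidef) (hc : Q.Connected) {α δ : Q.I → ℤ}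
    (hα : α ∈ Q.SigmaSet K l) (hδ : δ ∈ Q.Rplus K l) (h1 : Q.pp δ = 1) : ¬ δ < α := fun hlt => by
  have hsub : α - δ ∈ Q.Rplus K l := hp.sub_mem_Rplus hc hα.1 h1 hδ.2 hlt
  rw [← add_sub_cancel δ α] at hα
  have := pp_add_pp_lt_of_mem_SigmaSet hα hδ hsub
  rw [add_sub_cancel, hp.pp_sub_of_pp_eq_one h1] at this
  lia

lemma mem_SigmaSet_of_isIndecomposableIn {α : Q.I → ℤ}
    (hα : IsIndecomposableIn (AddSubmonoid.closure (Q.Rplus K l)) α) : α ∈ Q.SigmaSet K l := by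
  obtain ⟨hmem, hsum⟩ := (isIndecomposableIn_closure_iff fun _ => pos_of_mem_Rplus).1 hα
  exact ⟨hmem, fun n β hn hβ h => absurd h (hsum n β hn hβ)⟩

lemma isIndecomposableIn_of_mem_SigmaSet {α : Q.I → ℤ} (hα : α ∈ Q.SigmaSet K l)
    (h0 : Q.pp α = 0) : IsIndecomposableIn (AddSubmonoid.closure (Q.Rplus K l)) α := by
  refine (isIndecomposableIn_closure_iff fun _ => pos_of_mem_Rplus).2
    ⟨hα.1, fun n β hn hβ h => ?_⟩
  have hlt := hα.2 n β hn hβ h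
  rw [h0] at hlt
  exact hlt.not_ge (Finset.sum_nonneg fun j _ => pp_nonneg_of_mem_Rplus (hβ j))

lemma IsMinImag.mem_Rplus {δ : Q.I → ℤ} (hδ : Q.IsMinImag δ) (hp : Q.PosSemidef)
    (hc : Q.Connected) (hl : Q.pair K l δ = 0) : δ ∈ Q.Rplus K l :=
  ⟨(hp.isPosRoot_iff hc).2 ⟨hδ.pos, hδ.pp_eq_one ▸ zero_le_one⟩, hl⟩

lemma IsMinImag.pp_eq_zero_of_lt {δ β : Q.I → ℤ} (hδ : Q.IsMinImag δ) (hp : Q.PosSemidef)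
    (hβ : β ∈ Q.Rplus K l) (hlt : β < δ) : Q.pp β = 0 :=
  (hp.pp_eq_zero_or_one (pp_nonneg_of_mem_Rplus hβ)).resolve_right fun h1 =>
    hlt.not_ge (hδ.le_of_pp_eq_one hp (pos_of_mem_Rplus hβ) h1)

lemma IsMinImag.mem_SigmaSet {δ : Q.I → ℤ} (hδ : Q.IsMinImag δ) (hp : Q.PosSemidef)
    (hc : Q.Connected) (hl : Q.pair K l δ = 0) : δ ∈ Q.SigmaSet K l := by
  refine ⟨hδ.mem_Rplus hp hc hl, fun n β hn hβ hsum => ?_⟩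
  have hlt : ∀ j, β j < δ := fun j => by
    have : Nontrivial (Fin n) := Fin.nontrivial_iff_two_le.2 hn
    obtain ⟨k, hk⟩ := exists_ne j
    rw [hsum]
    exact Finset.single_lt_sum hk (Finset.mem_univ _) (Finset.mem_univ _)
      (pos_of_mem_Rplus (hβ k)) fun m _ _ => (pos_of_mem_Rplus (hβ m)).le
  rw [hδ.pp_eq_one, Finset.sum_eq_zero fun j _ => hδ.pp_eq_zero_of_lt hp (hβ j) (hlt j)]
  exact one_pos

lemma IsMinImag.le_of_mem_SigmaSet {δ α : Q.I → ℤ} (hδ : Q.IsMinImag δ) (hp : Q.PosSemidef)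
    (hc : Q.Connected) (hl : Q.pair K l δ = 0) (hα : α ∈ Q.SigmaSet K l) : α ≤ δ :=
  (hδ.lt_or_le hp hc hα.1.1).resolve_left
    (hp.not_lt_of_mem_SigmaSet hc hα (hδ.mem_Rplus hp hc hl) hδ.pp_eq_one)

lemma IsMinImag.eq_of_mem_SigmaSet {δ α : Q.I → ℤ} (hδ : Q.IsMinImag δ) (hp : Q.PosSemidef)
    (hc : Q.Connected) (hl : Q.pair K l δ = 0) (hα : α ∈ Q.SigmaSet K l) (h1 : Q.pp α = 1) :
    α = δ :=
  (hδ.le_of_mem_SigmaSet hp hc hl hα).antisymm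
    (hδ.le_of_pp_eq_one hp (pos_of_mem_Rplus hα.1) h1)

end Sigma

end FinQuiver

theorem stmt11_general (Q : FinQuiver) (K : Type) [Field K] (l : Q.I → K) (δ : Q.I → ℤ)
    (hc : Q.Connected) (hp : Q.PosSemidef) (hδ : Q.IsMinImag δ) (hl : Q.pair K l δ = 0) :
    Q.SigmaSet K l = {δ} ∪
      {α | α ∈ Q.NRplus K l ∧ α ≠ 0 ∧
        ¬ ∃ β γ : Q.I → ℤ, β ∈ Q.NRplus K l ∧ γ ∈ Q.NRplus K l ∧
          β ≠ 0 ∧ γ ≠ 0 ∧ α = β + γ} ∧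
    ∀ α ∈ Q.SigmaSet K l, ∀ i, α i ≤ δ i := by
  refine ⟨Set.Subset.antisymm (fun α hα => ?_) (Set.union_subset ?_ fun α hα => ?_),
    fun α hα => hδ.le_of_mem_SigmaSet hp hc hl hα⟩
  · rcases hp.pp_eq_zero_or_one (FinQuiver.pp_nonneg_of_mem_Rplus hα.1) with h0 | h1
    · exact .inr (FinQuiver.isIndecomposableIn_of_mem_SigmaSet hα h0)
    · exact .inl (hδ.eq_of_mem_SigmaSet hp hc hl hα h1)
  · exact Set.singleton_subset_iff.2 (hδ.mem_SigmaSet hp hc hl)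
  · exact FinQuiver.mem_SigmaSet_of_isIndecomposableIn hα

/-- for an extended Dynkin quiver with minimal positive imaginary
root `δ` and `λ·δ = 0`, the set `Σ_λ` consists of `δ` together with the
indecomposable elements of `ℕR_λ^+`, and all its elements are `≤ δ`. -/
theorem stmt11 (Q : FinQuiver) (K : Type) [Field K] [CharZero K] [IsAlgClosed K]
    (l : Q.I → K) (δ : Q.I → ℤ)
    (hQ : Q.IsExtDynkin) (hδ : Q.IsMinImag δ) (hl : Q.pair K l δ = 0) :
    Q.SigmaSet K l = {δ} ∪
      {α | α ∈ Q.NRplus K l ∧ α ≠ 0 ∧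
        ¬ ∃ β γ : Q.I → ℤ, β ∈ Q.NRplus K l ∧ γ ∈ Q.NRplus K l ∧
          β ≠ 0 ∧ γ ≠ 0 ∧ α = β + γ} ∧
    ∀ α ∈ Q.SigmaSet K l, ∀ i, α i ≤ δ i :=
  stmt11_general Q K l δ hQ.1 hQ.2.1 hδ hl

end
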